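/- Let α be a factor of ω with |α| ≥ 2. Then the set {(i,j) ∈ {0,1}² : the word i α j is a factor of ω} has at least 3 elements if and only if there exists n ≥ 0 such that α is one of the four words 0^{(n)}1^{(n)}, 1^{(n)}0^{(n)}, 0^{(n)}1^{(n)}1^{(n)}0^{(n)}, 1^{(n)}0^{(n)}0^{(n)}1^{(n)}; and in that case the set has exactly 4 elements. -/

import Mathlib

/-- One-sided Thue–Morse sequence: parity of the binary digit sum. -/
def tm (n : ℕ) : ℕ := (Nat.digits 2 n).sum % 2

/-- Two-sided Thue–Morse sequence `ω : ℤ → {0,1}`. -/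
def tmZ (n : ℤ) : ℕ := if 0 ≤ n then tm n.toNat else tm (-n - 1).toNat

/-- The block `ω_[m, m+k-1]` of the two-sided Thue–Morse sequence. -/
def tmBlock (m : ℤ) (k : ℕ) : List ℕ := (List.range k).map fun j => tmZ (m + j)

/-- A (nonempty) word is a factor of the two-sided Thue–Morse sequence. -/
def IsFactor (α : List ℕ) : Prop := α ≠ [] ∧ ∃ m : ℤ, α = tmBlock m α.length

/-- The words `i⁽ⁿ⁾`: `blk i 0 = [i]`, `blk i (n+1) = blk i n ++ blk (1-i) n`. -/
def blk : ℕ → ℕ → List ℕ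
  | i, 0 => [i]
  | i, n + 1 => blk i n ++ blk (1 - i) n

theorem tm_even (n : ℕ) : tm (2 * n) = tm n := by
  unfold tm
  rcases Nat.eq_zero_or_pos n with h | h
  · subst h; simp
  · rw [Nat.digits_def' (by norm_num) (by omega)]
    simp

theorem tm_odd (n : ℕ) : tm (2 * n + 1) = 1 - tm n := by
  unfold tm
  rw [Nat.digits_def' (by norm_num) (by omega)]
  have h1 : (2 * n + 1) % 2 = 1 := by omega
  have h2 : (2 * n + 1) / 2 = n := by omega
  rw [h1, h2, List.sum_cons]
  omega

theorem tm_le (n : ℕ) : tm n ≤ 1 := by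
  unfold tm; omega

theorem tm_zero : tm 0 = 0 := by simp [tm]

theorem tm_pos (K : ℕ) : ∀ r < 2 ^ K, tm (6 * 2 ^ K + r) = tm r := by
  induction K with
  | zero =>
    intro r hr
    have : r = 0 := by simpa using hr
    subst this
    simp [tm]
  | succ K ih =>
    intro r hr
    rw [pow_succ] at hr ⊢
    rcases Nat.even_or_odd' r with ⟨s, rfl | rfl⟩
    · rw [show 6 * (2 ^ K * 2) + 2 * s = 2 * (6 * 2 ^ K + s) by ring, tm_even, tm_even,
        ih s (by omega)]
    · rw [show 6 * (2 ^ K * 2) + (2 * s + 1) = 2 * (6 * 2 ^ K + s) + 1 by ring, tm_odd, tm_odd,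
        ih s (by omega)]

theorem tm_neg (K : ℕ) : ∀ r < 2 ^ K, tm (6 * 2 ^ K - 1 - r) = (tm r + K) % 2 := by
  induction K with
  | zero =>
    intro r hr
    have : r = 0 := by simpa using hr
    subst this
    simp [tm]
  | succ K ih =>
    intro r hr
    rw [pow_succ] at hr ⊢
    rcases Nat.even_or_odd' r with ⟨s, rfl | rfl⟩
    · rw [show 6 * (2 ^ K * 2) - 1 - 2 * s = 2 * (6 * 2 ^ K - 1 - s) + 1 by omega, tm_even, tm_odd,
        ih s (by omega)]
      omega
    · rw [show 6 * (2 ^ K * 2) - 1 - (2 * s + 1) = 2 * (6 * 2 ^ K - 1 - s) by omega, tm_even,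
        tm_odd, ih s (by omega)]
      have := tm_le s
      omega

theorem tmZ_link (m : ℤ) (k : ℕ) : ∃ p : ℕ, ∀ t < k, tmZ (m + (t : ℕ)) = tm (p + t) := by
  obtain ⟨K, hK⟩ : ∃ K, K = 2 * (m.natAbs + k) := ⟨_, rfl⟩
  have hlt : K < 2 ^ K := Nat.lt_two_pow_self
  refine ⟨(6 * 2 ^ K + m).toNat, fun t ht => ?_⟩
  obtain ⟨A, hA⟩ : ∃ A : ℕ, A = 2 ^ K := ⟨_, rfl⟩
  have hAz : (2 : ℤ) ^ K = (A : ℤ) := by rw [hA]; push_cast; rfl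
  rw [hAz]
  unfold tmZ
  split_ifs with h
  · have := tm_pos K (m + t).toNat (by omega)
    rw [← this, ← hA]
    congr 1
    omega
  · have := tm_neg K (-(m + t) - 1).toNat (by omega)
    have h2 := tm_le (-(m + t) - 1).toNat
    rw [show (6 * (A : ℤ) + m).toNat + t = 6 * 2 ^ K - 1 - (-(m + t) - 1).toNat by omega, this]
    omega

/-- one-sided blocks -/
def oB (m k : ℕ) : List ℕ := (List.range k).map fun j => tm (m + j)

theorem oB_length (m k : ℕ) : (oB m k).length = k := by simp [oB]

theorem oB_zero (m : ℕ) : oB m 0 = [] := rfl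

theorem oB_succ (m k : ℕ) : oB m (k + 1) = tm m :: oB (m + 1) k := by
  simp only [oB, List.range_succ_eq_map, List.map_cons, List.map_map]
  congr 1
  apply List.map_congr_left
  intro a _
  simp only [Function.comp]
  congr 1
  omega

theorem oB_snoc (m k : ℕ) : oB m (k + 1) = oB m k ++ [tm (m + k)] := by
  simp [oB, List.range_succ]

theorem oB_congr {m p k : ℕ} : oB m k = oB p k ↔ ∀ t < k, tm (m + t) = tm (p + t) := by
  simp [oB]

theorem tmBlock_eq (m : ℤ) (k : ℕ) :
    tmBlock m k = (List.range k).map fun j : ℕ => tmZ (m + (j : ℤ)) := by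
  unfold tmBlock
  simp [List.map_flatMap, ← List.map_eq_flatMap]

theorem isFactor_iff (w : List ℕ) : IsFactor w ↔ w ≠ [] ∧ ∃ m : ℕ, w = oB m w.length := by
  unfold IsFactor
  refine and_congr_right fun _ => ⟨?_, ?_⟩
  · rintro ⟨m, hm⟩
    obtain ⟨p, hp⟩ := tmZ_link m w.length
    refine ⟨p, hm.trans ?_⟩
    rw [tmBlock_eq]
    unfold oB
    apply List.map_congr_left
    intro a ha
    exact hp a (by simpa using ha)
  · rintro ⟨m, hm⟩
    refine ⟨m, hm.trans ?_⟩
    rw [tmBlock_eq]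
    unfold oB
    apply List.map_congr_left
    intro a _
    unfold tmZ
    rw [if_pos (by omega)]
    congr 1

/-- extension at position `p` -/
def TExt (α : List ℕ) (i j : ℕ) : Prop :=
  ∃ p, tm p = i ∧ oB (p + 1) α.length = α ∧ tm (p + 1 + α.length) = j

theorem ext_iff' (α : List ℕ) (i j : ℕ) : IsFactor (i :: (α ++ [j])) ↔ TExt α i j := by
  rw [isFactor_iff]
  have hl : (i :: (α ++ [j])).length = α.length + 1 + 1 := by simp
  rw [hl]
  constructor
  · rintro ⟨_, m, hm⟩
    rw [oB_succ, oB_snoc] at hm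
    obtain ⟨h1, h2⟩ := List.cons.inj hm
    obtain ⟨h3, h4⟩ := List.append_inj h2 (by rw [oB_length])
    exact ⟨m, h1.symm, h3.symm, by simpa using h4.symm⟩
  · rintro ⟨p, h1, h2, h3⟩
    refine ⟨by simp, p, ?_⟩
    rw [oB_succ, oB_snoc, h1, h2, h3]

/-- the substitution -/
def mu (w : List ℕ) : List ℕ := w.flatMap fun x => [x, 1 - x]

theorem mu_append (u v : List ℕ) : mu (u ++ v) = mu u ++ mu v := by simp [mu]

theorem mu_length (u : List ℕ) : (mu u).length = 2 * u.length := by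
  induction u with
  | nil => rfl
  | cons a u ih => simp [mu] at *; omega

theorem oB_mu (m k : ℕ) : oB (2 * m) (2 * k) = mu (oB m k) := by
  induction k generalizing m with
  | zero => rfl
  | succ k ih =>
    rw [show 2 * (k + 1) = 2 * k + 1 + 1 by ring, oB_succ, oB_succ,
      show 2 * m + 1 + 1 = 2 * (m + 1) by ring, ih, tm_even, tm_odd, oB_succ]
    simp [mu]

theorem blk_mu (n : ℕ) : ∀ i, i ≤ 1 → mu (blk i n) = blk i (n + 1) := by
  induction n with
  | zero => intro i hi; simp [mu, blk]
  | succ n ih =>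
    intro i hi
    rw [blk, mu_append, ih i hi, ih (1 - i) (by omega)]
    rfl

def Form (α : List ℕ) (n : ℕ) : Prop := α = blk 0 n ++ blk 1 n ∨ α = blk 1 n ++ blk 0 n ∨
        α = blk 0 n ++ blk 1 n ++ blk 1 n ++ blk 0 n ∨
        α = blk 1 n ++ blk 0 n ++ blk 0 n ++ blk 1 n

theorem form_mu {α : List ℕ} {n : ℕ} (h : Form α n) : Form (mu α) (n + 1) := by
  have h0 := blk_mu n 0 (by norm_num)
  have h1 := blk_mu n 1 (by norm_num)
  unfold Form at *
  rw [← h0, ← h1]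
  simp only [← mu_append]
  rcases h with h | h | h | h <;> subst h <;> simp

theorem form_succ {α : List ℕ} {n : ℕ} (h : Form α (n + 1)) : ∃ β, α = mu β ∧ Form β n := by
  have h0 := blk_mu n 0 (by norm_num)
  have h1 := blk_mu n 1 (by norm_num)
  unfold Form at *
  rw [← h0, ← h1] at h
  simp only [← mu_append] at h
  rcases h with h | h | h | h <;> exact ⟨_, h, by simp⟩

def Good (α : List ℕ) : Prop := ∀ i j, i ≤ 1 → j ≤ 1 → TExt α i j

theorem good_mu {α : List ℕ} (h : Good α) : Good (mu α) := by
  intro i j hi hj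
  obtain ⟨p, h1, h2, h3⟩ := h (1 - i) j (by omega) hj
  refine ⟨2 * p + 1, ?_, ?_, ?_⟩
  · rw [tm_odd, h1]; omega
  · rw [mu_length, show 2 * p + 1 + 1 = 2 * (p + 1) by ring, oB_mu, h2]
  · rw [mu_length, show 2 * p + 1 + 1 + 2 * α.length = 2 * (p + 1 + α.length) by ring, tm_even, h3]

theorem good_base {α : List ℕ} (h : Form α 0) : Good α := by
  have key : ∀ α ∈ [[0, 1], [1, 0], [0, 1, 1, 0], [1, 0, 0, 1]], ∀ i < 2, ∀ j < 2,
      ∃ p < 64, tm p = i ∧ oB (p + 1) α.length = α ∧ tm (p + 1 + α.length) = j := by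
    decide +kernel
  have hm : α ∈ [[0, 1], [1, 0], [0, 1, 1, 0], [1, 0, 0, 1]] := by
    rcases h with h | h | h | h <;> subst h <;> simp [blk]
  intro i j hi hj
  obtain ⟨p, -, hp⟩ := key α hm i (by omega) j (by omega)
  exact ⟨p, hp⟩

theorem good_form (n : ℕ) : ∀ α, Form α n → Good α := by
  induction n with
  | zero => exact fun α h => good_base h
  | succ n ih =>
    intro α h
    obtain ⟨β, rfl, hβ⟩ := form_succ h
    exact good_mu (ih β hβ)

theorem tm_double {m : ℕ} (h : tm m = tm (m + 1)) : m % 2 = 1 := by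
  by_contra hc
  obtain ⟨q, rfl⟩ : ∃ q, m = 2 * q := ⟨m / 2, by omega⟩
  rw [tm_odd, tm_even] at h
  have := tm_le q
  omega

theorem tm_odd_ne {m : ℕ} (h : m % 2 = 0) : tm (m + 1) = 1 - tm m := by
  obtain ⟨q, rfl⟩ : ∃ q, m = 2 * q := ⟨m / 2, by omega⟩
  rw [tm_odd, tm_even]

theorem no_cube {m : ℕ} (h : tm m = tm (m + 1)) (h2 : tm (m + 1) = tm (m + 2)) : False := by
  have := tm_double h
  have := tm_double (m := m + 1) h2
  omega

theorem no_alt {m : ℕ} (h : ∀ t < 4, tm (m + t) ≠ tm (m + t + 1)) : False := by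
  have h0 := h 0 (by norm_num)
  have h1 := h 1 (by norm_num)
  have h2 := h 2 (by norm_num)
  have h3 := h 3 (by norm_num)
  obtain ⟨q, hq⟩ : ∃ q, m = 2 * q ∨ m = 2 * q + 1 := ⟨m / 2, by omega⟩
  have e0 := tm_even q
  have o0 := tm_odd q
  have e1 := tm_even (q + 1)
  have o1 := tm_odd (q + 1)
  have e2 := tm_even (q + 2)
  have o2 := tm_odd (q + 2)
  have l0 := tm_le q
  have l1 := tm_le (q + 1)
  have l2 := tm_le (q + 2)
  have nc : ¬ (tm q = tm (q + 1) ∧ tm (q + 1) = tm (q + 2)) := fun h => no_cube h.1 h.2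
  rcases hq with rfl | rfl <;>
    simp only [Nat.mul_add, Nat.add_assoc, Nat.reduceAdd, Nat.reduceMul, Nat.add_zero] at * <;> omega

/-- at most one missing extension -/
def Three (α : List ℕ) : Prop :=
  ∃ a b, a ≤ 1 ∧ b ≤ 1 ∧ ∀ i j, i ≤ 1 → j ≤ 1 → (i = a → j = b → False) → TExt α i j

theorem Three.left {α : List ℕ} (h : Three α) (i : ℕ) (hi : i ≤ 1) : ∃ j, TExt α i j := by
  obtain ⟨a, b, ha, hb, h⟩ := h
  exact ⟨1 - b, h i (1 - b) hi (by omega) (by omega)⟩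

theorem Three.right {α : List ℕ} (h : Three α) (j : ℕ) (hj : j ≤ 1) : ∃ i, TExt α i j := by
  obtain ⟨a, b, ha, hb, h⟩ := h
  exact ⟨1 - a, h (1 - a) j (by omega) hj (by omega)⟩

theorem main_aux (k : ℕ) : ∀ m, 2 ≤ k → Three (oB m k) → ∃ n, Form (oB m k) n := by
  induction k using Nat.strong_induction_on with
  | _ k ih =>
  intro m hk h3
  by_cases hd : ∃ t, t + 1 < k ∧ tm (m + t) = tm (m + t + 1)
  · obtain ⟨t, htk, ht⟩ := hd
    have par : ∀ p, oB p k = oB m k → (p + t) % 2 = 1 := by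
      intro p hp
      rw [oB_congr] at hp
      apply tm_double
      rw [hp t (by omega), ht]
      exact (hp (t + 1) htk).symm
    have parm := par m rfl
    by_cases hm : m % 2 = 1
    · exfalso
      obtain ⟨j, p, h1, h2, -⟩ := h3.left (tm m) (tm_le m)
      rw [oB_length] at h2
      have hp := par _ h2
      rw [oB_congr] at h2
      have e := h2 0 (by omega)
      have := tm_odd_ne (m := p) (by omega)
      have := tm_le m
      simp only [Nat.add_zero] at e
      omega
    by_cases hk2 : k % 2 = 1
    · exfalso
      obtain ⟨j, p, -, h2, h1⟩ := h3.right (tm (m + (k - 1))) (tm_le _)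
      rw [oB_length] at h2 h1
      have hp := par _ h2
      rw [oB_congr] at h2
      have e := h2 (k - 1) (by omega)
      have := tm_odd_ne (m := p + 1 + (k - 1)) (by omega)
      rw [show p + 1 + (k - 1) + 1 = p + 1 + k by omega] at this
      have := tm_le (m + (k - 1))
      omega
    obtain ⟨q, rfl⟩ : ∃ q, m = 2 * q := ⟨m / 2, by omega⟩
    obtain ⟨l, rfl⟩ : ∃ l, k = 2 * l := ⟨k / 2, by omega⟩
    have hl : 2 ≤ l := by omega
    have h3' : Three (oB q l) := by
      obtain ⟨a, b, ha, hb, h⟩ := h3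
      refine ⟨1 - a, b, by omega, hb, fun i j hi hj hij => ?_⟩
      obtain ⟨p, h1, h2, h4⟩ := h (1 - i) j (by omega) hj (fun x y => hij (by omega) y)
      rw [oB_length] at h2 h4
      have hp := par _ h2
      obtain ⟨s, rfl⟩ : ∃ s, p = 2 * s + 1 := ⟨p / 2, by omega⟩
      rw [oB_congr] at h2
      refine ⟨s, ?_, ?_, ?_⟩
      · rw [tm_odd] at h1
        have := tm_le s
        omega
      · rw [oB_length, oB_congr]
        intro u hu
        have := h2 (2 * u) (by omega)
        rwa [show 2 * s + 1 + 1 + 2 * u = 2 * (s + 1 + u) by ring,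
          show 2 * q + 2 * u = 2 * (q + u) by ring, tm_even, tm_even] at this
      · rw [oB_length]
        rwa [show 2 * s + 1 + 1 + 2 * l = 2 * (s + 1 + l) by ring, tm_even] at h4
    obtain ⟨n, hn⟩ := ih l (by omega) q hl h3'
    exact ⟨n + 1, by rw [oB_mu]; exact form_mu hn⟩
  · push Not at hd
    have lm := tm_le m
    have lm1 := tm_le (m + 1)
    have lm2 := tm_le (m + 2)
    have lm3 := tm_le (m + 3)
    have d0 := hd 0 (by omega)
    simp only [Nat.add_zero] at d0
    by_cases k2 : k = 2
    · subst k2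
      refine ⟨0, ?_⟩
      rw [oB_succ, oB_succ, oB_zero]
      simp only [Form, blk]
      rcases Nat.le_one_iff_eq_zero_or_eq_one.1 lm with h | h
      · left
        simp only [h, show tm (m + 1) = 1 by omega]; rfl
      · right; left
        simp only [h, show tm (m + 1) = 0 by omega]; rfl
    have d1 := hd 1 (by omega)
    exfalso
    by_cases k3 : k = 3
    · subst k3
      have hh : TExt (oB m 3) (tm m) (tm m) ∨ TExt (oB m 3) (1 - tm m) (1 - tm m) := by
        obtain ⟨a, b, ha, hb, h⟩ := h3
        by_cases hab : tm m = a ∧ tm m = b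
        · right; apply h <;> omega
        · left; apply h <;> omega
      rcases hh with ⟨p, h1, h2, h4⟩ | ⟨p, h1, h2, h4⟩
      all_goals
        rw [oB_length] at h2 h4
        rw [oB_congr] at h2
        have e0 := h2 0 (by omega)
        have e1 := h2 1 (by omega)
        have e2 := h2 2 (by omega)
        simp only [Nat.add_zero, Nat.add_assoc, Nat.reduceAdd] at *
      · have := tm_double (m := p) (by omega)
        have := tm_double (m := p + 3) (by simp only [Nat.add_assoc, Nat.reduceAdd]; omega)
        omega
      · apply no_alt (m := p)
        intro t ht
        interval_cases t <;> simp only [Nat.add_zero, Nat.add_assoc, Nat.reduceAdd] <;> omega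
    have d2 := hd 2 (by omega)
    by_cases k4 : k = 4
    · subst k4
      obtain ⟨j, p, h1, h2, -⟩ := h3.left (1 - tm m) (by omega)
      rw [oB_length] at h2
      rw [oB_congr] at h2
      have e0 := h2 0 (by omega)
      have e1 := h2 1 (by omega)
      have e2 := h2 2 (by omega)
      have e3 := h2 3 (by omega)
      simp only [Nat.add_zero, Nat.add_assoc, Nat.reduceAdd] at *
      apply no_alt (m := p)
      intro t ht
      interval_cases t <;> simp only [Nat.add_zero, Nat.add_assoc, Nat.reduceAdd] <;> omega
    exact no_alt (m := m) fun t ht => hd t (by omega)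

def Sq : Set (ℕ × ℕ) := {p | p.1 ≤ 1 ∧ p.2 ≤ 1}

theorem Sq_eq : Sq = ((Finset.range 2 ×ˢ Finset.range 2 : Finset (ℕ × ℕ)) : Set (ℕ × ℕ)) := by
  ext ⟨a, b⟩
  simp [Sq, Nat.lt_succ_iff]

theorem Sq_ncard : Sq.ncard = 4 := by
  rw [Sq_eq, Set.ncard_coe_finset]; rfl

theorem Sq_finite : Sq.Finite := by
  rw [Sq_eq]; exact Finset.finite_toSet _

theorem three_of_ncard (α : List ℕ)
    (h : 3 ≤ {p : ℕ × ℕ | p.1 ≤ 1 ∧ p.2 ≤ 1 ∧ TExt α p.1 p.2}.ncard) : Three α := by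
  set S := {p : ℕ × ℕ | p.1 ≤ 1 ∧ p.2 ≤ 1 ∧ TExt α p.1 p.2} with hS
  have hsub : S ⊆ Sq := fun p hp => ⟨hp.1, hp.2.1⟩
  have hc : (Sq \ S).ncard ≤ 1 := by
    rw [Set.ncard_sdiff hsub (Sq_finite.subset hsub), Sq_ncard]; omega
  rw [Set.ncard_le_one (Sq_finite.subset Set.sdiff_subset)] at hc
  by_cases hne : ∃ q, q ∈ Sq \ S
  · obtain ⟨⟨a, b⟩, hq⟩ := hne
    refine ⟨a, b, hq.1.1, hq.1.2, fun i j hi hj hij => ?_⟩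
    by_contra hE
    have := hc (i, j) ⟨⟨hi, hj⟩, fun h => hE h.2.2⟩ (a, b) hq
    simp only [Prod.mk.injEq] at this
    exact hij this.1 this.2
  · refine ⟨0, 0, by omega, by omega, fun i j hi hj _ => ?_⟩
    by_contra hE
    exact hne ⟨(i, j), ⟨hi, hj⟩, fun h => hE h.2.2⟩

/-- A factor `α` of the two-sided Thue–Morse sequence with `|α| ≥ 2` has at least `3`
two-sided one-letter extensions iff `α` is one of `0⁽ⁿ⁾1⁽ⁿ⁾`, `1⁽ⁿ⁾0⁽ⁿ⁾`,
`0⁽ⁿ⁾1⁽ⁿ⁾1⁽ⁿ⁾0⁽ⁿ⁾`, `1⁽ⁿ⁾0⁽ⁿ⁾0⁽ⁿ⁾1⁽ⁿ⁾` for some `n`; in that case it has exactly `4`. -/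
theorem extension_number_three_iff (α : List ℕ) (hα : IsFactor α) (hlen : 2 ≤ α.length) :
    (3 ≤ {p : ℕ × ℕ | (p.1 = 0 ∨ p.1 = 1) ∧ (p.2 = 0 ∨ p.2 = 1) ∧
        IsFactor (p.1 :: (α ++ [p.2]))}.ncard ↔
      ∃ n : ℕ, α = blk 0 n ++ blk 1 n ∨ α = blk 1 n ++ blk 0 n ∨
        α = blk 0 n ++ blk 1 n ++ blk 1 n ++ blk 0 n ∨
        α = blk 1 n ++ blk 0 n ++ blk 0 n ++ blk 1 n) ∧
    (3 ≤ {p : ℕ × ℕ | (p.1 = 0 ∨ p.1 = 1) ∧ (p.2 = 0 ∨ p.2 = 1) ∧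
        IsFactor (p.1 :: (α ++ [p.2]))}.ncard →
      {p : ℕ × ℕ | (p.1 = 0 ∨ p.1 = 1) ∧ (p.2 = 0 ∨ p.2 = 1) ∧
        IsFactor (p.1 :: (α ++ [p.2]))}.ncard = 4) := by 
  have hset : {p : ℕ × ℕ | (p.1 = 0 ∨ p.1 = 1) ∧ (p.2 = 0 ∨ p.2 = 1) ∧
        IsFactor (p.1 :: (α ++ [p.2]))} = {p : ℕ × ℕ | p.1 ≤ 1 ∧ p.2 ≤ 1 ∧ TExt α p.1 p.2} := by
    ext p
    simp only [Set.mem_ofPred_eq, ext_iff', Nat.le_one_iff_eq_zero_or_eq_one]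
  rw [hset]
  have fwd : 3 ≤ {p : ℕ × ℕ | p.1 ≤ 1 ∧ p.2 ≤ 1 ∧ TExt α p.1 p.2}.ncard → ∃ n, Form α n := by
    intro h
    have h3 := three_of_ncard α h
    obtain ⟨-, m, hm⟩ := (isFactor_iff α).1 hα
    rw [hm] at h3 ⊢
    exact main_aux _ m hlen h3
  have bwd : (∃ n, Form α n) → {p : ℕ × ℕ | p.1 ≤ 1 ∧ p.2 ≤ 1 ∧ TExt α p.1 p.2}.ncard = 4 := by
    rintro ⟨n, hn⟩
    have hg := good_form n α hn
    rw [← Sq_ncard]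
    congr 1
    ext p
    exact ⟨fun h => ⟨h.1, h.2.1⟩, fun h => ⟨h.1, h.2, hg _ _ h.1 h.2⟩⟩
  exact ⟨⟨fwd, fun h => by rw [bwd h]; norm_num⟩, fun h => bwd (fwd h)⟩
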